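/- arXiv:2105.07177 — 6 statements merged into one kernel-verified Lean document; each statement's English description precedes it below -/
import Mathlib

section
/- The image of φ in so(6,ℂ) equals the set of all 6×6 block matrices of the form [[ [x], −y ],[ y, [x] ]], where x ranges over ℂ³ and y ranges over the symmetric traceless 3×3 complex matrices. -/
/-!
The map `φ` records the decomposition of `A` into its skew part `K` and its symmetric part `S`.
The skew 3×3 matrices are exactly the matrices `[x]`, and since `K` has trace zero,
`tr A = tr S`. Hence `A` traceless gives `K = [x]` and `S` symmetric traceless; conversely
`[x] + y` is a traceless matrix with skew part `[x]` and symmetric part `y`.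
-/

open Matrix

noncomputable def crossMat (x : Fin 3 → ℂ) : Matrix (Fin 3) (Fin 3) ℂ :=
  !![0, -x 2, x 1;
     x 2, 0, -x 0;
     -x 1, x 0, 0]

/-- `sl(3,ℂ)`: the traceless 3×3 complex matrices. -/
def sl3 : Set (Matrix (Fin 3) (Fin 3) ℂ) := {A | A.trace = 0}

/-- `φ(A) = [[K, -S],[S, K]]` with `K = (A - Aᵀ)/2`, `S = (A + Aᵀ)/2`. -/
noncomputable def phi (A : Matrix (Fin 3) (Fin 3) ℂ) :
    Matrix (Fin 3 ⊕ Fin 3) (Fin 3 ⊕ Fin 3) ℂ :=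
  Matrix.fromBlocks (((1 : ℂ)/2) • (A - Aᵀ)) (-(((1 : ℂ)/2) • (A + Aᵀ)))
    (((1 : ℂ)/2) • (A + Aᵀ)) (((1 : ℂ)/2) • (A - Aᵀ))


/-- The image of `φ` in `so(6,ℂ)` is exactly the set of block matrices
`[[ [x], -y ],[ y, [x] ]]` with `x ∈ ℂ³` and `y` symmetric traceless. -/
theorem stmt3 :
    phi '' sl3 =
      {M : Matrix (Fin 3 ⊕ Fin 3) (Fin 3 ⊕ Fin 3) ℂ |
        ∃ (x : Fin 3 → ℂ) (y : Matrix (Fin 3) (Fin 3) ℂ),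
          yᵀ = y ∧ y.trace = 0 ∧
          M = Matrix.fromBlocks (crossMat x) (-y) y (crossMat x)} := by
  ext M
  simp only [Set.mem_image, Set.mem_setOf_eq, sl3]
  constructor
  · rintro ⟨A, hA, rfl⟩
    -- A skew-symmetric `K` is `[x]` for `x = (K₃₂, K₁₃, K₂₁)`.
    refine ⟨![(A 2 1 - A 1 2) / 2, (A 0 2 - A 2 0) / 2, (A 1 0 - A 0 1) / 2],
      ((1 : ℂ) / 2) • (A + Aᵀ), ?_, ?_, ?_⟩
    · simp [add_comm]
    · simp [hA]
    · have hK : ((1 : ℂ) / 2) • (A - Aᵀ) =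
          crossMat ![(A 2 1 - A 1 2) / 2, (A 0 2 - A 2 0) / 2, (A 1 0 - A 0 1) / 2] := by
        ext i j
        fin_cases i <;> fin_cases j <;> simp [crossMat] <;> ring
      rw [phi, hK]
  · rintro ⟨x, y, hy, hy0, rfl⟩
    have hx : (crossMat x)ᵀ = -crossMat x := by
      ext i j
      fin_cases i <;> fin_cases j <;> simp [crossMat]
    have hx0 : (crossMat x).trace = 0 := by
      simp [crossMat, Matrix.trace, Fin.sum_univ_three]
    -- The preimage is `[x] + y`, whose skew and symmetric parts are `[x]` and `y`.
    refine ⟨crossMat x + y, by rw [Matrix.trace_add, hx0, hy0, add_zero], ?_⟩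
    have hK : ((1 : ℂ) / 2) • (crossMat x + y - (crossMat x + y)ᵀ) = crossMat x := by
      rw [Matrix.transpose_add, hx, hy]
      module
    have hS : ((1 : ℂ) / 2) • (crossMat x + y + (crossMat x + y)ᵀ) = y := by
      rw [Matrix.transpose_add, hx, hy]
      module
    rw [phi, hK, hS]
end

section
/- For every A ∈ sl(3,ℂ) and all a, b ∈ ℂ³, the commutator [ι₆(φ(A)), {a}¹ + {b}²] equals {c}¹ + {d}², where (c,d) ∈ ℂ³ ⊕ ℂ³ is the image of (a,b) under the matrix φ(A) acting on ℂ⁶ = ℂ³ ⊕ ℂ³. Consequently 𝔪 is invariant under the adjoint action of ι₆(φ(sl(3,ℂ))), and under the identification (a,b) ↦ {a}¹ + {b}² this adjoint representation of sl(3,ℂ) on 𝔪 is exactly the representation induced by the canonical representation of so(6,ℂ) on ℂ⁶, i.e. the direct sum of the two 3-dimensional fundamental representations of sl(3,ℂ). -/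
/-!
The bracket formula is an identity between 7×7 matrices whose entries are bilinear in `A` and
`(a, b)`, and it is verified entry by entry. For traceless `A` with skew part `K` and symmetric
part `S` (so `tr S = 0`), the blocks of the commutator reduce to `[K, [a]] = [K a]` and
`S [a] + [a] S = -[S a]`; the latter is `S [a] + [a] S = (tr S) [a] - [S a]`, and is where
tracelessness enters. Invariance of `𝔪` is then immediate, since the right-hand side of the
formula lies in `𝔪`.
-/


open Matrix

/-- Index type for 7×7 matrices, with rows/columns grouped in sizes (3,1,3). -/
abbrev I7 := Fin 3 ⊕ (Fin 1 ⊕ Fin 3)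

/-- `{a}¹ = [[0, 2a, [a]], [-2aᵀ, 0, 0], [[a], 0, 0]]`. -/
noncomputable def m1 (a : Fin 3 → ℂ) : Matrix I7 I7 ℂ :=
  Matrix.of fun i j =>
    match i, j with
    | .inl _, .inl _ => 0
    | .inl i, .inr (.inl _) => 2 * a i
    | .inl i, .inr (.inr j) => crossMat a i j
    | .inr (.inl _), .inl j => -(2 * a j)
    | .inr (.inl _), .inr _ => 0
    | .inr (.inr i), .inl j => crossMat a i j
    | .inr (.inr _), .inr _ => 0

/-- `{b}² = [[[b], 0, 0], [0, 0, -2bᵀ], [0, 2b, -[b]]]`. -/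
noncomputable def m2 (b : Fin 3 → ℂ) : Matrix I7 I7 ℂ :=
  Matrix.of fun i j =>
    match i, j with
    | .inl i, .inl j => crossMat b i j
    | .inl _, .inr _ => 0
    | .inr (.inl _), .inl _ => 0
    | .inr (.inl _), .inr (.inl _) => 0
    | .inr (.inl _), .inr (.inr j) => -(2 * b j)
    | .inr (.inr _), .inl _ => 0
    | .inr (.inr i), .inr (.inl _) => 2 * b i
    | .inr (.inr i), .inr (.inr j) => -(crossMat b i j)

/-- `ι₆` : embed a 6×6 matrix into rows and columns {1,2,3,5,6,7} of a 7×7 matrix,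
whose fourth row and column are zero. -/
noncomputable def iota6 (M : Matrix (Fin 3 ⊕ Fin 3) (Fin 3 ⊕ Fin 3) ℂ) :
    Matrix I7 I7 ℂ :=
  Matrix.of fun i j =>
    match i, j with
    | .inl i, .inl j => M (.inl i) (.inl j)
    | .inl i, .inr (.inr j) => M (.inl i) (.inr j)
    | .inr (.inr i), .inl j => M (.inr i) (.inl j)
    | .inr (.inr i), .inr (.inr j) => M (.inr i) (.inr j)
    | _, _ => 0

/-- `𝔪 = { {a}¹ + {b}² : a, b ∈ ℂ³ }`. -/
noncomputable def mSet : Set (Matrix I7 I7 ℂ) := {X | ∃ a b : Fin 3 → ℂ, X = m1 a + m2 b}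


set_option maxHeartbeats 2000000 in
/-- The adjoint action of `ι₆(φ(A))` on `{a}¹ + {b}²` is the action of `φ(A)` on `(a, b)`. -/
theorem bracket_eq (A : Matrix (Fin 3) (Fin 3) ℂ) (hA : A.trace = 0) (a b : Fin 3 → ℂ) :
    iota6 (phi A) * (m1 a + m2 b) - (m1 a + m2 b) * iota6 (phi A) =
      m1 (fun i => (phi A *ᵥ Sum.elim a b) (Sum.inl i)) +
      m2 (fun i => (phi A *ᵥ Sum.elim a b) (Sum.inr i)) := by
  have h : A 2 2 = -A 0 0 - A 1 1 := by
    rw [Matrix.trace_fin_three] at hA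
    linear_combination hA
  ext i j
  -- The sums are expanded while `i` and `j` are still variables, once per block.
  rcases i with i | i | i <;> rcases j with j | j | j <;>
    simp only [Matrix.sub_apply, Matrix.add_apply, Matrix.mul_apply, Matrix.mulVec, dotProduct,
      Fintype.sum_sum_type, Fin.sum_univ_three, Finset.univ_unique, Finset.sum_singleton,
      iota6, phi, m1, m2, Matrix.of_apply, Matrix.fromBlocks_apply₁₁, Matrix.fromBlocks_apply₁₂,
      Matrix.fromBlocks_apply₂₁, Matrix.fromBlocks_apply₂₂, Sum.elim_inl, Sum.elim_inr,
      Matrix.smul_apply, Matrix.neg_apply, Matrix.transpose_apply, smul_eq_mul, crossMat,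
      mul_zero, zero_mul, add_zero, zero_add, sub_zero] <;>
    fin_cases i <;> fin_cases j <;>
    simp only [Fin.mk_one, Fin.zero_eta, Fin.reduceFinMk, Matrix.cons_val, h] <;> ring

/-- `[ι₆(φ(A)), {a}¹ + {b}²] = {c}¹ + {d}²` where `(c,d) = φ(A)(a,b)`; consequently `𝔪` is
invariant under the adjoint action of `ι₆(φ(sl(3,ℂ)))`, and this adjoint representation is
the one induced by the canonical representation of `so(6,ℂ)` on `ℂ⁶ = ℂ³ ⊕ ℂ³`. -/
theorem stmt5 (A : Matrix (Fin 3) (Fin 3) ℂ) (hA : A.trace = 0) (a b : Fin 3 → ℂ) :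
    (iota6 (phi A) * (m1 a + m2 b) - (m1 a + m2 b) * iota6 (phi A) =
      m1 (fun i => (phi A *ᵥ Sum.elim a b) (Sum.inl i)) +
      m2 (fun i => (phi A *ᵥ Sum.elim a b) (Sum.inr i))) ∧
    (∀ X ∈ mSet, iota6 (phi A) * X - X * iota6 (phi A) ∈ mSet) := by
  refine ⟨bracket_eq A hA a b, ?_⟩
  rintro X ⟨c, d, rfl⟩
  exact ⟨_, _, bracket_eq A hA c d⟩
end

section
/- The subspace g₂ of so(7,ℂ) is closed under the matrix commutator; that is, g₂ is a Lie subalgebra of the Lie algebra of skew-symmetric 7×7 complex matrices. -/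
/-!
The set `g2set` is the subspace of the skew-symmetric matrices cut out by seven linear equations
(`21 - 7 = 14 = dim g₂`). Write `Z₁₁, Z₃₁, Z₃₃` for the corresponding 3×3 blocks of a skew matrix
`Z`, and let `2a`, `2b` be the two 3-vectors in its middle column. Then `Z ∈ g2set` as soon as
`Z₁₁ - Z₃₃ = 2[b]`, `Z₃₁ - Z₃₁ᵀ = 2[a]` and `tr Z₃₁ = 0`: the matrix `A` is recovered from its skew
part `Z₁₁ - [b]` and its symmetric part `Z₃₁ - [a]` (`mem_g2set_of_skew`). A commutator of skew
matrices is skew, so closure reduces to checking these seven equations for `XY - YX`, which are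
polynomial identities in the parameters of `X` and `Y`.
-/

open Matrix

/-- `g₂ = { ι₆(φ(A)) + {a}¹ + {b}² : A ∈ sl(3,ℂ), a b ∈ ℂ³ }`. -/
noncomputable def g2set : Set (Matrix I7 I7 ℂ) :=
  {X | ∃ (A : Matrix (Fin 3) (Fin 3) ℂ) (a b : Fin 3 → ℂ),
    A.trace = 0 ∧ X = iota6 (phi A) + m1 a + m2 b}

lemma crossMat_swap (x : Fin 3 → ℂ) (i j : Fin 3) : crossMat x j i = -crossMat x i j := by
  fin_cases i <;> fin_cases j <;> simp [crossMat]

/-- Two skew-symmetric 3×3 arrays agree once their entries above the diagonal do. -/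
lemma eq_crossMat_of_lt {f : Fin 3 → Fin 3 → ℂ} (x : Fin 3 → ℂ) (hf : ∀ i j, f j i = -f i j)
    (h : ∀ i j, i < j → f i j = crossMat x i j) (i j : Fin 3) : f i j = crossMat x i j := by
  rcases lt_trichotomy i j with hij | rfl | hij
  · exact h i j hij
  · linear_combination (1 / 2 : ℂ) * hf i i - (1 / 2 : ℂ) * crossMat_swap x i i
  · rw [hf j i, crossMat_swap x j i, h j i hij]

lemma skew_of_mem_g2set {X : Matrix I7 I7 ℂ} (hX : X ∈ g2set) : Xᵀ = -X := by
  obtain ⟨A, a, b, -, rfl⟩ := hX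
  have hcross := crossMat_swap
  ext i j
  rcases i with i | i | i <;> rcases j with j | j | j <;>
    first
    | (simp [iota6, phi, m1, m2, hcross _ i j] <;> ring)
    | simp [iota6, phi, m1, m2]

/-- A skew-symmetric matrix satisfying the seven linear equations of `g₂` lies in `g2set`. -/
lemma mem_g2set_of_skew {Z : Matrix I7 I7 ℂ} (hZ : Zᵀ = -Z)
    (hb' : ∀ i j, i < j → Z (.inl i) (.inl j) - Z (.inr (.inr i)) (.inr (.inr j)) =
      crossMat (fun k => Z (.inr (.inr k)) (.inr (.inl 0))) i j)
    (ha' : ∀ i j, i < j → Z (.inr (.inr i)) (.inl j) - Z (.inr (.inr j)) (.inl i) =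
      crossMat (fun k => Z (.inl k) (.inr (.inl 0))) i j)
    (ht : ∑ i, Z (.inr (.inr i)) (.inl i) = 0) : Z ∈ g2set := by
  have hs (p q : I7) : Z p q = -Z q p := by
    simpa using congrFun (congrFun hZ q) p
  have hb := eq_crossMat_of_lt _ (fun i j => by
    linear_combination hs (.inl j) (.inl i) - hs (.inr (.inr j)) (.inr (.inr i))) hb'
  have ha := eq_crossMat_of_lt _ (fun i j => by ring) ha'
  have hhalf (x : Fin 3 → ℂ) (i j : Fin 3) :
      crossMat (fun k => x k / 2) i j = crossMat x i j / 2 := by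
    fin_cases i <;> fin_cases j <;> simp [crossMat, neg_div]
  -- `A` is the sum of its skew part `Z₁₁ - [b]` and its symmetric part `Z₃₁ - [a]`; by `hb` and
  -- `ha` these are `(Z₁₁ + Z₃₃) / 2` and `(Z₃₁ + Z₃₁ᵀ) / 2`.
  refine ⟨Matrix.of fun i j =>
      (Z (.inl i) (.inl j) + Z (.inr (.inr i)) (.inr (.inr j))) / 2 +
      (Z (.inr (.inr i)) (.inl j) + Z (.inr (.inr j)) (.inl i)) / 2,
    fun k => Z (.inl k) (.inr (.inl 0)) / 2,
    fun k => Z (.inr (.inr k)) (.inr (.inl 0)) / 2, ?_, ?_⟩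
  · have hd (p : I7) : Z p p = 0 := by linear_combination (1 / 2 : ℂ) * hs p p
    simpa [Matrix.trace, hd] using ht
  · ext i j
    rcases i with i | i | i <;> rcases j with j | j | j
    · simp only [iota6, phi, m1, m2, hhalf, ← hb, Matrix.add_apply, Matrix.of_apply,
        Matrix.fromBlocks_apply₁₁, Matrix.smul_apply, Matrix.sub_apply, Matrix.transpose_apply,
        smul_eq_mul]
      linear_combination (1 / 4 : ℂ) * hs (.inl i) (.inl j) +
        (1 / 4 : ℂ) * hs (.inr (.inr i)) (.inr (.inr j))
    · obtain rfl := Subsingleton.elim j 0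
      simp [iota6, m1, m2]
      ring
    · simp only [iota6, phi, m1, m2, hhalf, ← ha, Matrix.add_apply, Matrix.of_apply,
        Matrix.fromBlocks_apply₁₂, Matrix.smul_apply, Matrix.neg_apply, Matrix.transpose_apply,
        smul_eq_mul]
      linear_combination hs (.inl i) (.inr (.inr j)) +
        (1 / 4 : ℂ) * hs (.inl i) (.inl j) +
        (1 / 4 : ℂ) * hs (.inr (.inr i)) (.inr (.inr j))
    · obtain rfl := Subsingleton.elim i 0
      simp [iota6, m1, m2, hs (.inr (.inl 0)) (.inl j)]
      ring
    · obtain rfl := Subsingleton.elim i 0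
      obtain rfl := Subsingleton.elim j 0
      simp [iota6, m1, m2]
      linear_combination (1 / 2 : ℂ) * hs (.inr (.inl 0)) (.inr (.inl 0))
    · obtain rfl := Subsingleton.elim i 0
      simp [iota6, m1, m2, hs (.inr (.inl 0)) (.inr (.inr j))]
      ring
    · simp only [iota6, phi, m1, m2, hhalf, ← ha, Matrix.add_apply, Matrix.of_apply,
        Matrix.fromBlocks_apply₂₁, Matrix.smul_apply, Matrix.transpose_apply, smul_eq_mul]
      linear_combination -(1 / 4 : ℂ) * hs (.inl i) (.inl j) -
        (1 / 4 : ℂ) * hs (.inr (.inr i)) (.inr (.inr j))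
    · obtain rfl := Subsingleton.elim j 0
      simp [iota6, m1, m2]
      ring
    · simp only [iota6, phi, m1, m2, hhalf, ← hb, Matrix.add_apply, Matrix.of_apply,
        Matrix.fromBlocks_apply₂₂, Matrix.smul_apply, Matrix.sub_apply, Matrix.transpose_apply,
        smul_eq_mul]
      linear_combination (1 / 4 : ℂ) * hs (.inl i) (.inl j) +
        (1 / 4 : ℂ) * hs (.inr (.inr i)) (.inr (.inr j))

set_option maxHeartbeats 4000000 in
/-- `g₂` is closed under the matrix commutator, i.e. it is a Lie subalgebra of the Lie
algebra of skew-symmetric 7×7 complex matrices. -/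
theorem stmt6 :
    (∀ X ∈ g2set, Xᵀ = -X) ∧
    (∀ X ∈ g2set, ∀ Y ∈ g2set, X * Y - Y * X ∈ g2set) := by
  refine ⟨fun X hX => skew_of_mem_g2set hX, fun X hX Y hY => ?_⟩
  have hskew : (X * Y - Y * X)ᵀ = -(X * Y - Y * X) := by
    simp [skew_of_mem_g2set hX, skew_of_mem_g2set hY]
  obtain ⟨A, a, b, hA, rfl⟩ := hX
  obtain ⟨B, c, d, hB, rfl⟩ := hY
  rw [Matrix.trace_fin_three] at hA hB
  -- The trace conditions are used by eliminating the last diagonal entries.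
  have hA' : A 2 2 = -A 0 0 - A 1 1 := by linear_combination hA
  have hB' : B 2 2 = -B 0 0 - B 1 1 := by linear_combination hB
  refine mem_g2set_of_skew hskew ?_ ?_ ?_
  · intro i j hij
    fin_cases i <;> fin_cases j <;> first | exact absurd hij (by decide) | skip
    all_goals
      simp [iota6, phi, m1, m2, crossMat, Matrix.mul_apply, Fin.sum_univ_three, hA', hB']
      ring
  · intro i j hij
    fin_cases i <;> fin_cases j <;> first | exact absurd hij (by decide) | skip
    all_goals
      simp [iota6, phi, m1, m2, crossMat, Matrix.mul_apply, Fin.sum_univ_three, hA', hB']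
      ring
  · simp [iota6, phi, m1, m2, crossMat, Matrix.mul_apply, Fin.sum_univ_three, hA', hB']
    ring
end

section
/- The subspace g₂ of so(7,ℂ) has dimension 14 over ℂ, and it is the direct sum of the subspaces ι₆(φ(sl(3,ℂ))) (of dimension 8) and 𝔪 (of dimension 6); in particular ι₆(φ(sl(3,ℂ))) ∩ 𝔪 = {0}. -/
/-!
The map `(A, a, b) ↦ ι₆(φ(A)) + {a}¹ + {b}²` is linear and injective on `gl(3,ℂ) × ℂ³ × ℂ³`
(`g2param_injective`): the fourth column of the image recovers `a` and `b`, and the blocks `K`, `S`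
recover `A = K + S`. Under it `g₂`, `ι₆(φ(sl(3,ℂ)))` and `𝔪` are the images of the submodules
`sl(3,ℂ) × ℂ⁶`, `sl(3,ℂ) × 0` and `0 × ℂ⁶` (`g2set_eq`, `hSet_eq`, `mSet_eq`), so the dimensions
`14 = 8 + 6`, the sum and the trivial intersection are all read off from the source.
-/

open Matrix

/-- `ι₆(φ(sl(3,ℂ)))`. -/
noncomputable def hSet : Set (Matrix I7 I7 ℂ) :=
  {X | ∃ A : Matrix (Fin 3) (Fin 3) ℂ, A.trace = 0 ∧ X = iota6 (phi A)}


lemma crossMat_add (x y : Fin 3 → ℂ) : crossMat (x + y) = crossMat x + crossMat y := by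
  ext i j
  fin_cases i <;> fin_cases j <;> simp [crossMat] <;> ring

lemma crossMat_smul (c : ℂ) (x : Fin 3 → ℂ) : crossMat (c • x) = c • crossMat x := by
  ext i j
  fin_cases i <;> fin_cases j <;> simp [crossMat]

/-- The parametrisation `(A, a, b) ↦ ι₆(φ(A)) + {a}¹ + {b}²`, as a linear map on all of
`gl(3,ℂ) × ℂ³ × ℂ³`; no trace condition is imposed on `A`. -/
noncomputable def g2param :
    (Matrix (Fin 3) (Fin 3) ℂ × ((Fin 3 → ℂ) × (Fin 3 → ℂ))) →ₗ[ℂ] Matrix I7 I7 ℂ where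
  toFun p := iota6 (phi p.1) + m1 p.2.1 + m2 p.2.2
  map_add' p q := by
    ext i j
    rcases i with i | i | i <;> rcases j with j | j | j <;>
      simp [iota6, phi, m1, m2, crossMat_add] <;> ring
  map_smul' c p := by
    ext i j
    rcases i with i | i | i <;> rcases j with j | j | j <;>
      simp [iota6, phi, m1, m2, crossMat_smul] <;> ring

lemma g2param_apply (A : Matrix (Fin 3) (Fin 3) ℂ) (a b : Fin 3 → ℂ) :
    g2param (A, a, b) = iota6 (phi A) + m1 a + m2 b := rfl

/-- The fourth column of the image is `(2a, 0, 2b)`, so it determines `a` and `b`; the remaining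
blocks then determine `K` and `S`, hence `A = K + S`. -/
lemma g2param_injective : Function.Injective g2param := by
  rw [← LinearMap.ker_eq_bot, LinearMap.ker_eq_bot']
  rintro ⟨A, a, b⟩ h
  rw [g2param_apply] at h
  have ha : a = 0 := by
    ext i
    simpa [iota6, m1, m2] using congrFun₂ h (.inl i) (.inr (.inl 0))
  have hb : b = 0 := by
    ext i
    simpa [iota6, m1, m2] using congrFun₂ h (.inr (.inr i)) (.inr (.inl 0))
  subst ha hb
  have hc : crossMat 0 = 0 := by
    ext i j
    fin_cases i <;> fin_cases j <;> simp [crossMat]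
  have hA : A = 0 := by
    ext i j
    have hK := congrFun₂ h (.inl i) (.inl j)
    have hS := congrFun₂ h (.inr (.inr i)) (.inl j)
    simp [iota6, phi, m1, m2, hc] at hK hS
    simp only [Matrix.zero_apply]
    linear_combination (1 / 2 : ℂ) * hK + hS
  simp [hA]

/-- `sl(3,ℂ)` as a submodule, the kernel of the trace. -/
noncomputable abbrev slSub : Submodule ℂ (Matrix (Fin 3) (Fin 3) ℂ) :=
  LinearMap.ker (Matrix.traceLinearMap (Fin 3) ℂ ℂ)

lemma finrank_slSub : Module.finrank ℂ slSub = 8 := by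
  have hs : Function.Surjective (Matrix.traceLinearMap (Fin 3) ℂ ℂ) := fun c =>
    ⟨Matrix.single 0 0 c, by simp⟩
  have h : _ + Module.finrank ℂ slSub = _ :=
    (Matrix.traceLinearMap (Fin 3) ℂ ℂ).finrank_range_add_finrank_ker
  rw [LinearMap.range_eq_top.2 hs, finrank_top, Module.finrank_matrix] at h
  simp only [Fintype.card_fin, Module.finrank_self] at h
  omega

lemma iota6_phi_zero : iota6 (phi 0) = 0 := by
  ext i j
  rcases i with i | i | i <;> rcases j with j | j | j <;> simp [iota6, phi]

lemma m1_zero_add_m2_zero : m1 0 + m2 0 = 0 := by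
  have h := g2param_apply 0 0 0
  rw [iota6_phi_zero, zero_add] at h
  rw [← h]
  exact map_zero g2param

lemma g2set_eq : g2set = ((slSub.prod ⊤).map g2param : Set (Matrix I7 I7 ℂ)) := by
  ext X
  simp [g2set, g2param_apply, eq_comm]

lemma hSet_eq : hSet = ((slSub.prod ⊥).map g2param : Set (Matrix I7 I7 ℂ)) := by
  ext X
  constructor
  · rintro ⟨A, hA, rfl⟩
    exact ⟨(A, 0, 0), ⟨hA, rfl⟩, by rw [g2param_apply, add_assoc, m1_zero_add_m2_zero, add_zero]⟩
  · rintro ⟨⟨A, p⟩, ⟨hA, hp⟩, rfl⟩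
    obtain rfl : p = 0 := hp
    refine ⟨A, hA, ?_⟩
    change iota6 (phi A) + m1 0 + m2 0 = _
    rw [add_assoc, m1_zero_add_m2_zero, add_zero]

lemma mSet_eq : mSet =
    (((⊥ : Submodule ℂ (Matrix (Fin 3) (Fin 3) ℂ)).prod ⊤).map g2param :
      Set (Matrix I7 I7 ℂ)) := by
  ext X
  simp [mSet, g2param_apply, iota6_phi_zero, eq_comm]

lemma finrank_map_prod (p : Submodule ℂ (Matrix (Fin 3) (Fin 3) ℂ))
    (q : Submodule ℂ ((Fin 3 → ℂ) × (Fin 3 → ℂ))) :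
    Module.finrank ℂ ((p.prod q).map g2param) = Module.finrank ℂ p + Module.finrank ℂ q := by
  have hpq : p.prod q = LinearMap.range (p.subtype.prodMap q.subtype) := by
    rw [LinearMap.range_prodMap, Submodule.range_subtype, Submodule.range_subtype]
  rw [hpq, ← LinearMap.range_comp, LinearMap.finrank_range_of_inj, Module.finrank_prod]
  exact g2param_injective.comp
    (Function.Injective.prodMap p.injective_subtype q.injective_subtype)

/-- `g₂` has dimension 14, and is the direct sum of `ι₆(φ(sl(3,ℂ)))` (dimension 8) and
`𝔪` (dimension 6); in particular `ι₆(φ(sl(3,ℂ))) ∩ 𝔪 = {0}`. -/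
theorem stmt7 :
    Module.finrank ℂ (Submodule.span ℂ g2set) = 14 ∧
    Module.finrank ℂ (Submodule.span ℂ hSet) = 8 ∧
    Module.finrank ℂ (Submodule.span ℂ mSet) = 6 ∧
    Submodule.span ℂ hSet ⊔ Submodule.span ℂ mSet = Submodule.span ℂ g2set ∧
    hSet ∩ mSet = {0} := by
  rw [g2set_eq, hSet_eq, mSet_eq, Submodule.span_eq, Submodule.span_eq, Submodule.span_eq]
  refine ⟨?_, ?_, ?_, ?_, ?_⟩
  · rw [finrank_map_prod, finrank_slSub]
    simp
  · rw [finrank_map_prod, finrank_slSub]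
    simp
  · rw [finrank_map_prod]
    simp
  · rw [← Submodule.map_sup, Submodule.prod_sup_prod]
    simp
  · rw [← Submodule.coe_inf, ← Submodule.map_inf _ g2param_injective, Submodule.prod_inf_prod]
    simp
end

section
/- For every A ∈ sl(3,ℂ) and all a, b ∈ ℂ³, tr( ι₆(φ(A)) · ({a}¹ + {b}²) ) = 0; that is, the subspaces ι₆(φ(sl(3,ℂ))) and 𝔪 of g₂ are orthogonal with respect to the trace form B, so that g₂ = ι₆(φ(sl(3,ℂ))) ⊕ 𝔪 is an orthogonal reductive decomposition. -/
/-!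
The trace is computed blockwise. The fourth row and column of `ι₆(φ(A))` vanish, so only the
four 3×3 corner blocks contribute, giving
`tr(K[b]) - tr(S[a]) + tr(S[a]) - tr(K[b])`: the diagonal blocks of `φ(A)` agree while those of
`{b}²` are opposite, and the off-diagonal blocks of `φ(A)` are opposite while those of `{a}¹`
agree. This needs neither the skew-symmetry of `[x]` nor `tr A = 0`.
-/

open Matrix

/-- The contributions of the four corner blocks cancel in pairs, for any `A`. -/
theorem trace_iota6_phi_mul (A : Matrix (Fin 3) (Fin 3) ℂ) (a b : Fin 3 → ℂ) :
    (iota6 (phi A) * (m1 a + m2 b)).trace = 0 := by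
  simp only [Matrix.trace, Matrix.diag_apply, Matrix.mul_apply, Matrix.add_apply,
    Fintype.sum_sum_type, iota6, m1, m2, phi, Matrix.of_apply, Matrix.fromBlocks_apply₁₁,
    Matrix.fromBlocks_apply₁₂, Matrix.fromBlocks_apply₂₁, Matrix.fromBlocks_apply₂₂,
    Matrix.neg_apply, zero_mul, zero_add, add_zero, mul_neg, neg_mul,
    Finset.sum_const_zero, Finset.sum_add_distrib, Finset.sum_neg_distrib]
  ring

/-- `tr(ι₆(φ(A)) · ({a}¹ + {b}²)) = 0`: the subspaces `ι₆(φ(sl(3,ℂ)))` and `𝔪` of `g₂`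
are orthogonal with respect to the trace form. -/
theorem stmt8 :
    (∀ (A : Matrix (Fin 3) (Fin 3) ℂ), A.trace = 0 → ∀ a b : Fin 3 → ℂ,
      (iota6 (phi A) * (m1 a + m2 b)).trace = 0) ∧
    (∀ X ∈ hSet, ∀ Y ∈ mSet, (X * Y).trace = 0) := by
  refine ⟨fun A _ a b => trace_iota6_phi_mul A a b, ?_⟩
  rintro _ ⟨A, -, rfl⟩ _ ⟨a, b, rfl⟩
  exact trace_iota6_phi_mul A a b
end

section
/- Let g₂⊥ := { X ∈ so(7,ℂ) : tr(XY) = 0 for all Y ∈ g₂ } be the orthogonal complement of g₂ in so(7,ℂ) with respect to the trace form. Then g₂⊥ has dimension 7 over ℂ, and so(7,ℂ) = g₂ ⊕ g₂⊥ is a direct sum of linear subspaces. -/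
/-!
Skew-symmetric 7×7 matrices are written `skewMat p u Q v r` with `p, u, v, r ∈ ℂ³` and `Q` an
arbitrary 3×3 block. In these coordinates the trace form is `-2` times the standard dot product
(`trace_skewMat_mul`), and the elements of `g₂` are the matrices with
`p = k + b`, `r = k - b`, `u = 2a`, `v = 2b`, `Q = [a] - S`, where `S` is symmetric and
trace-free (`g2_eq_skewMat`).

Orthogonality to `g₂` thus reads `r = -p`, `v = -p`, `Q = cI + [q]`, `u = -q`, so `g₂⊥` is the
image of the injective linear map `perpMap` on `ℂ × ℂ³ × ℂ³`, and has dimension 7. Splitting a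
skew-symmetric matrix into its components in `g₂` and `g₂⊥`, and the uniqueness of the splitting,
come down to the invertibility of the 2×2 systems `b + p' = x`, `2b - p' = y`, of determinant `-3`.
-/

open Matrix

/-- `g₂⊥`: the orthogonal complement of `g₂` in `so(7,ℂ)` w.r.t. the trace form. -/
noncomputable def g2perpSet : Set (Matrix I7 I7 ℂ) :=
  {X | Xᵀ = -X ∧ ∀ Y ∈ g2set, (X * Y).trace = 0}

/-- The skew-symmetric 7×7 matrix `[[[p], u, Q], [-uᵀ, 0, -vᵀ], [-Qᵀ, v, [r]]]`, in blocks of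
sizes (3,1,3). These matrices are coordinates on all of `so(7,ℂ)`. -/
noncomputable def skewMat (p u : Fin 3 → ℂ) (Q : Matrix (Fin 3) (Fin 3) ℂ) (v r : Fin 3 → ℂ) :
    Matrix I7 I7 ℂ :=
  Matrix.of fun i j =>
    match i, j with
    | .inl i, .inl j => crossMat p i j
    | .inl i, .inr (.inl _) => u i
    | .inl i, .inr (.inr j) => Q i j
    | .inr (.inl _), .inl j => -u j
    | .inr (.inl _), .inr (.inl _) => 0
    | .inr (.inl _), .inr (.inr j) => -v j
    | .inr (.inr i), .inl j => -Q j i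
    | .inr (.inr i), .inr (.inl _) => v i
    | .inr (.inr i), .inr (.inr j) => crossMat r i j

lemma skewMat_transpose (p u : Fin 3 → ℂ) (Q : Matrix (Fin 3) (Fin 3) ℂ) (v r : Fin 3 → ℂ) :
    (skewMat p u Q v r)ᵀ = -skewMat p u Q v r := by
  ext i j
  rcases i with i | i | i <;> rcases j with j | j | j <;> fin_cases i <;> fin_cases j <;>
    simp [skewMat, crossMat]

lemma skewMat_add (p u : Fin 3 → ℂ) (Q : Matrix (Fin 3) (Fin 3) ℂ) (v r : Fin 3 → ℂ)
    (p' u' : Fin 3 → ℂ) (Q' : Matrix (Fin 3) (Fin 3) ℂ) (v' r' : Fin 3 → ℂ) :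
    skewMat (p + p') (u + u') (Q + Q') (v + v') (r + r') =
      skewMat p u Q v r + skewMat p' u' Q' v' r' := by
  ext i j
  rcases i with i | i | i <;> rcases j with j | j | j <;>
    simp [skewMat, crossMat_add] <;> ring

lemma skewMat_smul (c : ℂ) (p u : Fin 3 → ℂ) (Q : Matrix (Fin 3) (Fin 3) ℂ) (v r : Fin 3 → ℂ) :
    skewMat (c • p) (c • u) (c • Q) (c • v) (c • r) = c • skewMat p u Q v r := by
  ext i j
  rcases i with i | i | i <;> rcases j with j | j | j <;> simp [skewMat, crossMat_smul]

lemma exists_skewMat {X : Matrix I7 I7 ℂ} (hX : Xᵀ = -X) :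
    ∃ p u Q v r, X = skewMat p u Q v r := by
  have h : ∀ i j, X j i = -X i j := fun i j => by
    simpa using congrFun (congrFun hX i) j
  have h0 : ∀ i, X i i = 0 := fun i => self_eq_neg.mp (h i i)
  refine ⟨![X (.inl 2) (.inl 1), X (.inl 0) (.inl 2), X (.inl 1) (.inl 0)],
    fun i => X (.inl i) (.inr (.inl 0)), Matrix.of fun i j => X (.inl i) (.inr (.inr j)),
    fun i => X (.inr (.inr i)) (.inr (.inl 0)),
    ![X (.inr (.inr 2)) (.inr (.inr 1)), X (.inr (.inr 0)) (.inr (.inr 2)),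
      X (.inr (.inr 1)) (.inr (.inr 0))], ?_⟩
  ext i j
  rcases i with i | i | i <;> rcases j with j | j | j <;> fin_cases i <;> fin_cases j <;>
    simp [skewMat, crossMat, h0] <;> exact h _ _

lemma trace_skewMat_mul (p u : Fin 3 → ℂ) (Q : Matrix (Fin 3) (Fin 3) ℂ) (v r : Fin 3 → ℂ)
    (p' u' : Fin 3 → ℂ) (Q' : Matrix (Fin 3) (Fin 3) ℂ) (v' r' : Fin 3 → ℂ) :
    (skewMat p u Q v r * skewMat p' u' Q' v' r').trace =
      -2 * (∑ i, (p i * p' i + u i * u' i + v i * v' i + r i * r' i) +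
        ∑ i, ∑ j, Q i j * Q' i j) := by
  simp only [Matrix.trace, Matrix.diag_apply, Matrix.mul_apply, Fintype.sum_sum_type,
    Fin.sum_univ_three, Fin.sum_univ_one]
  simp [skewMat, crossMat]
  ring

/-- The axial vector of a 3×3 matrix: `crossMat (axial A)` is the skew part of `A`. -/
noncomputable def axial (A : Matrix (Fin 3) (Fin 3) ℂ) : Fin 3 → ℂ :=
  ![(A 2 1 - A 1 2) / 2, (A 0 2 - A 2 0) / 2, (A 1 0 - A 0 1) / 2]

set_option maxHeartbeats 1000000 in
lemma g2_eq_skewMat (A : Matrix (Fin 3) (Fin 3) ℂ) (a b : Fin 3 → ℂ) :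
    iota6 (phi A) + m1 a + m2 b =
      skewMat (axial A + b) (2 • a) (crossMat a - ((1 : ℂ) / 2) • (A + Aᵀ)) (2 • b)
        (axial A - b) := by
  ext i j
  rcases i with i | i | i <;> rcases j with j | j | j <;> fin_cases i <;> fin_cases j <;>
    simp [skewMat, crossMat, axial, iota6, phi, m1, m2] <;> ring

/-- The parametrization `(c, p, q) ↦ [[[p], -q, cI + [q]], [qᵀ, 0, pᵀ], [-cI + [q], -p, -[p]]]`
of `g₂⊥`. -/
noncomputable def perpMap : (ℂ × (Fin 3 → ℂ) × (Fin 3 → ℂ)) →ₗ[ℂ] Matrix I7 I7 ℂ where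
  toFun x := skewMat x.2.1 (-x.2.2) (x.1 • (1 : Matrix (Fin 3) (Fin 3) ℂ) + crossMat x.2.2)
    (-x.2.1) (-x.2.1)
  map_add' x y := by
    rw [← skewMat_add]
    congr 1
    · exact neg_add _ _
    · simp only [Prod.fst_add, Prod.snd_add, crossMat_add, add_smul]
      abel
    · exact neg_add _ _
    · exact neg_add _ _
  map_smul' c x := by
    rw [RingHom.id_apply, ← skewMat_smul]
    congr 1
    · exact (smul_neg _ _).symm
    · simp only [Prod.smul_fst, Prod.smul_snd, crossMat_smul, smul_add, smul_assoc]
    · exact (smul_neg _ _).symm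
    · exact (smul_neg _ _).symm

lemma perpMap_apply (c : ℂ) (p q : Fin 3 → ℂ) : perpMap (c, p, q) =
    skewMat p (-q) (c • (1 : Matrix (Fin 3) (Fin 3) ℂ) + crossMat q) (-p) (-p) := rfl

lemma perpMap_injective : Function.Injective perpMap := by
  rw [injective_iff_map_eq_zero]
  rintro ⟨c, p, q⟩ h
  have e : ∀ i j, perpMap (c, p, q) i j = 0 := fun i j => by rw [h]; rfl
  have hc : c = 0 := by
    simpa [perpMap_apply, skewMat, crossMat] using e (.inl 0) (.inr (.inr 0))
  have hp : p = 0 := funext fun i => by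
    simpa [perpMap_apply, skewMat] using e (.inr (.inl 0)) (.inr (.inr i))
  have hq : q = 0 := funext fun i => by
    simpa [perpMap_apply, skewMat] using e (.inr (.inl 0)) (.inl i)
  simp [hc, hp, hq]

lemma perpMap_mem (x : ℂ × (Fin 3 → ℂ) × (Fin 3 → ℂ)) : perpMap x ∈ g2perpSet := by
  obtain ⟨c, p, q⟩ := x
  refine ⟨skewMat_transpose _ _ _ _ _, ?_⟩
  rintro _ ⟨A, a, b, hA, rfl⟩
  rw [Matrix.trace_fin_three] at hA
  rw [g2_eq_skewMat, perpMap_apply, trace_skewMat_mul]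
  simp [Fin.sum_univ_three, crossMat, axial]
  linear_combination -c * hA

/-- Orthogonality to `g₂`, tested against the `{a}¹`, the `{b}²` and a basis of `sl(3,ℂ)`,
forces `r = -p`, `v = -p`, and `Q = cI - [u]`. -/
lemma g2perpSet_subset_range {X : Matrix I7 I7 ℂ} (hX : X ∈ g2perpSet) :
    X ∈ LinearMap.range perpMap := by
  obtain ⟨hs, ho⟩ := hX
  obtain ⟨p, u, Q, v, r, rfl⟩ := exists_skewMat hs
  have key : ∀ (A : Matrix (Fin 3) (Fin 3) ℂ) (a b : Fin 3 → ℂ), A.trace = 0 → _ :=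
    fun A a b hA => ho _ ⟨A, a, b, hA, rfl⟩
  simp only [g2_eq_skewMat, trace_skewMat_mul] at key
  have a0 := key 0 ![1, 0, 0] 0 (by simp)
  have a1 := key 0 ![0, 1, 0] 0 (by simp)
  have a2 := key 0 ![0, 0, 1] 0 (by simp)
  have b0 := key 0 0 ![1, 0, 0] (by simp)
  have b1 := key 0 0 ![0, 1, 0] (by simp)
  have b2 := key 0 0 ![0, 0, 1] (by simp)
  have d0 := key !![1, 0, 0; 0, -1, 0; 0, 0, 0] 0 0 (by simp [Matrix.trace_fin_three])
  have d1 := key !![0, 0, 0; 0, 1, 0; 0, 0, -1] 0 0 (by simp [Matrix.trace_fin_three])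
  have e01 := key !![0, 1, 0; 0, 0, 0; 0, 0, 0] 0 0 (by simp [Matrix.trace_fin_three])
  have e10 := key !![0, 0, 0; 1, 0, 0; 0, 0, 0] 0 0 (by simp [Matrix.trace_fin_three])
  have e02 := key !![0, 0, 1; 0, 0, 0; 0, 0, 0] 0 0 (by simp [Matrix.trace_fin_three])
  have e20 := key !![0, 0, 0; 0, 0, 0; 1, 0, 0] 0 0 (by simp [Matrix.trace_fin_three])
  have e12 := key !![0, 0, 0; 0, 0, 1; 0, 0, 0] 0 0 (by simp [Matrix.trace_fin_three])
  have e21 := key !![0, 0, 0; 0, 0, 0; 0, 1, 0] 0 0 (by simp [Matrix.trace_fin_three])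
  simp [Fin.sum_univ_three, crossMat, axial] at a0 a1 a2 b0 b1 b2 d0 d1 e01 e10 e02 e20 e12 e21
  refine ⟨(Q 0 0, p, -u), ?_⟩
  rw [perpMap_apply]
  congr 1
  · simp
  · ext i j
    fin_cases i <;> fin_cases j <;> simp [crossMat] <;> grind
  · ext i
    fin_cases i <;> simp <;> grind
  · ext i
    fin_cases i <;> simp <;> grind

lemma g2perpSet_eq : g2perpSet = (LinearMap.range perpMap : Set (Matrix I7 I7 ℂ)) := by
  refine Set.Subset.antisymm (fun X hX => g2perpSet_subset_range hX) ?_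
  rintro _ ⟨x, rfl⟩
  exact perpMap_mem x

/-- `g₂` and `g₂⊥` span `so(7,ℂ)`. The components of `X = skewMat p u Q v r` come from solving
`b + p' = (p - r)/2`, `2b - p' = v` for `b, p'` and `a + q = axial Q`, `2a - q = u` for `a, q`;
the trace part of `Q` goes to `g₂⊥` and its trace-free symmetric part to `g₂`. -/
lemma exists_decomp (X : Matrix I7 I7 ℂ) (hX : Xᵀ = -X) :
    ∃ Y ∈ g2set, ∃ Z ∈ g2perpSet, X = Y + Z := by
  obtain ⟨p, u, Q, v, r, rfl⟩ := exists_skewMat hX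
  refine ⟨_, ⟨crossMat (((1 : ℂ) / 2) • (p + r)) - ((1 : ℂ) / 2) • (Q + Qᵀ) +
      (Q.trace / 3) • (1 : Matrix (Fin 3) (Fin 3) ℂ),
      ((1 : ℂ) / 3) • (u + axial Q), ((1 : ℂ) / 3) • (((1 : ℂ) / 2) • (p - r) + v), ?_, rfl⟩,
    _, perpMap_mem (Q.trace / 3, ((1 : ℂ) / 3) • (p - r - v),
      ((1 : ℂ) / 3) • ((2 : ℂ) • axial Q - u)), ?_⟩
  · simp [Matrix.trace_fin_three, crossMat]
    ring
  · rw [g2_eq_skewMat, perpMap_apply, ← skewMat_add]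
    congr 1
    · ext i
      fin_cases i <;> simp [crossMat, axial, vecHead, vecTail] <;> ring
    · ext i
      fin_cases i <;> simp [axial, vecHead, vecTail] <;> ring
    · ext i j
      fin_cases i <;> fin_cases j <;> simp [crossMat, axial] <;> ring
    · ext i
      fin_cases i <;> simp <;> ring
    · ext i
      fin_cases i <;> simp [crossMat, axial, vecHead, vecTail] <;> ring

lemma g2_inter_perp : g2set ∩ g2perpSet = {0} := by
  ext X
  simp only [Set.mem_inter_iff, Set.mem_singleton_iff]
  constructor
  · rintro ⟨⟨A, a, b, hA, hX⟩, hp⟩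
    obtain ⟨⟨c, p, q⟩, rfl⟩ := g2perpSet_subset_range hp
    rw [Matrix.trace_fin_three] at hA
    rw [g2_eq_skewMat, perpMap_apply] at hX
    have e : ∀ i j, _ := fun i j => congrFun (congrFun hX i) j
    have hp' : ∀ i, p i = -(2 * b i) := fun i => by
      simpa [skewMat] using e (.inr (.inl 0)) (.inr (.inr i))
    have hq' : ∀ i, q i = -(2 * a i) := fun i => by
      simpa [skewMat] using e (.inr (.inl 0)) (.inl i)
    have c0 := e (.inl 0) (.inr (.inr 0))
    have c1 := e (.inl 1) (.inr (.inr 1))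
    have c2 := e (.inl 2) (.inr (.inr 2))
    have q0 := e (.inl 2) (.inr (.inr 1))
    have q0' := e (.inl 1) (.inr (.inr 2))
    have q1 := e (.inl 0) (.inr (.inr 2))
    have q1' := e (.inl 2) (.inr (.inr 0))
    have q2 := e (.inl 1) (.inr (.inr 0))
    have q2' := e (.inl 0) (.inr (.inr 1))
    have p0 := e (.inl 2) (.inl 1)
    have r0 := e (.inr (.inr 2)) (.inr (.inr 1))
    have p1 := e (.inl 0) (.inl 2)
    have r1 := e (.inr (.inr 0)) (.inr (.inr 2))
    have p2 := e (.inl 1) (.inl 0)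
    have r2 := e (.inr (.inr 1)) (.inr (.inr 0))
    simp [skewMat, crossMat, hp', hq'] at c0 c1 c2 q0 q0' q1 q1' q2 q2' p0 r0 p1 r1 p2 r2
    have hc : c = 0 := by linear_combination (c0 + c1 + c2 - hA) / 3
    have hb : p = 0 := by
      ext i
      rw [hp']
      fin_cases i <;> simp <;> grind
    have ha : q = 0 := by
      ext i
      rw [hq']
      fin_cases i <;> simp <;> grind
    rw [hc, hb, ha]
    exact map_zero perpMap
  · rintro rfl
    refine ⟨⟨0, 0, 0, by simp, ?_⟩, by simpa using perpMap_mem 0⟩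
    ext i j
    rcases i with i | i | i <;> rcases j with j | j | j <;> fin_cases i <;> fin_cases j <;>
      simp [iota6, phi, m1, m2, crossMat]

/-- `g₂⊥` has dimension 7 and `so(7,ℂ) = g₂ ⊕ g₂⊥` as linear subspaces. -/
theorem stmt12 :
    Module.finrank ℂ (Submodule.span ℂ g2perpSet) = 7 ∧
    (∀ X : Matrix I7 I7 ℂ, Xᵀ = -X → ∃ Y ∈ g2set, ∃ Z ∈ g2perpSet, X = Y + Z) ∧
    g2set ∩ g2perpSet = {0} := by
  refine ⟨?_, exists_decomp, g2_inter_perp⟩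
  rw [g2perpSet_eq, Submodule.span_eq, LinearMap.finrank_range_of_inj perpMap_injective]
  simp
end
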